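/- For any list T_1, …, T_t of subsets of 𝒦 with compact form of the element rearrangement T*_{t,1}, …, T*_{t,t}, the set function b⁺(T) = I(V_T; Y | V_{T^c}, Q) satisfies ∑_{i=1}^{t} I(V_{T_i}; Y | V_{T_i^c}, Q) ≥ ∑_{i=1}^{t} I(V_{T*_{t,i}}; Y | V_{(T*_{t,i})^c}, Q). -/

import Mathlib

open scoped Classical

/-- Probability that the random variable `X` (on the finite sample space `Ω` with
probability mass function `p`) takes the value `a`. -/
noncomputable def prob {Ω : Type} [Fintype Ω] (p : Ω → ℝ) {α : Type} (X : Ω → α)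
    (a : α) : ℝ :=
  ∑ ω : Ω, if X ω = a then p ω else 0

/-- Shannon entropy (base 2) of the random variable `X`, with the convention
`0 · log 0 = 0`. -/
noncomputable def ent {Ω : Type} [Fintype Ω] (p : Ω → ℝ) {α : Type} [Fintype α]
    (X : Ω → α) : ℝ :=
  -∑ a : α, prob p X a * Real.logb 2 (prob p X a)

/-- Conditional mutual information `I(X; Y | Z) = H(X,Z) + H(Y,Z) - H(X,Y,Z) - H(Z)`. -/
noncomputable def condMI {Ω : Type} [Fintype Ω] (p : Ω → ℝ) {α β γ : Type}
    [Fintype α] [Fintype β] [Fintype γ] (X : Ω → α) (Y : Ω → β) (Z : Ω → γ) : ℝ :=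
  ent p (fun ω => (X ω, Z ω)) + ent p (fun ω => (Y ω, Z ω))
    - ent p (fun ω => (X ω, Y ω, Z ω)) - ent p Z

/-- The tuple-valued random variable `V_J = (V_j)_{j ∈ J}`. -/
def VJ {Ω : Type} {K : ℕ} {α : Fin K → Type} (V : (i : Fin K) → Ω → α i)
    (J : Finset (Fin K)) : Ω → ((j : J) → α j) :=
  fun ω j => V j ω

/-- `V_1, …, V_K` are mutually conditionally independent given `Q`:
`P(V_1 = v_1, …, V_K = v_K, Q = q) · P(Q = q)^(K-1) = ∏ i, P(V_i = v_i, Q = q)`. -/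
def CondIndep {Ω : Type} [Fintype Ω] {𝒬 : Type} {K : ℕ} {α : Fin K → Type}
    (p : Ω → ℝ) (Q : Ω → 𝒬) (V : (i : Fin K) → Ω → α i) : Prop :=
  ∀ (q : 𝒬) (v : (i : Fin K) → α i),
    prob p (fun ω => ((fun i => V i ω : (i : Fin K) → α i), Q ω)) (v, q)
        * (prob p Q q) ^ (K - 1)
      = ∏ i : Fin K, prob p (fun ω => (V i ω, Q ω)) (v i, q)

/-- The `i`-th set of the compact form of the element rearrangement of the list
`T 0, …, T (t-1)` of subsets of `Fin K`. -/
def compactForm {K t : ℕ} (T : Fin t → Finset (Fin K)) (i : ℕ) : Finset (Fin K) :=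
  (Finset.powersetCard i (Finset.univ : Finset (Fin t))).sup fun S => S.inf T

/-! ### Probabilities and entropies as sums over the sample space -/

section Entropy

lemma VJ_eq_iff {Ω : Type} {K : ℕ} {α : Fin K → Type} {V : (i : Fin K) → Ω → α i}
    {J : Finset (Fin K)} {ω ω' : Ω} :
    VJ V J ω = VJ V J ω' ↔ ∀ j ∈ J, V j ω = V j ω' := by
  simp [VJ, funext_iff]

variable {Ω : Type} [Fintype Ω] {p : Ω → ℝ}

lemma prob_nonneg (hp : ∀ ω, 0 ≤ p ω) {α : Type} (X : Ω → α) (a : α) : 0 ≤ prob p X a :=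
  Finset.sum_nonneg fun ω _ => by split_ifs <;> simp [hp ω]

lemma le_prob_self (hp : ∀ ω, 0 ≤ p ω) {α : Type} (X : Ω → α) (ω : Ω) :
    p ω ≤ prob p X (X ω) := by
  have h := Finset.single_le_sum (f := fun ω' => if X ω' = X ω then p ω' else 0)
    (fun ω' _ => by split_ifs <;> simp [hp ω']) (Finset.mem_univ ω)
  simpa [prob] using h

lemma sum_prob_mul {α : Type} [Fintype α] (p : Ω → ℝ) (X : Ω → α) (g : α → ℝ) :
    ∑ a, prob p X a * g a = ∑ ω, p ω * g (X ω) := by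
  simp only [prob, Finset.sum_mul]
  rw [Finset.sum_comm]
  refine Finset.sum_congr rfl fun ω _ => ?_
  simp [ite_mul]

lemma sum_prob {α : Type} [Fintype α] (p : Ω → ℝ) (X : Ω → α) :
    ∑ a, prob p X a = ∑ ω, p ω := by
  simpa using sum_prob_mul p X fun _ => 1

/-- Marginalizing out the first component. -/
lemma sum_prob_pair {α γ : Type} [Fintype α] (p : Ω → ℝ) (X : Ω → α) (Z : Ω → γ) (c : γ) :
    ∑ a, prob p (fun ω => (X ω, Z ω)) (a, c) = prob p Z c := by
  simp only [prob, Prod.mk.injEq]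
  rw [Finset.sum_comm]
  refine Finset.sum_congr rfl fun ω _ => ?_
  by_cases h : Z ω = c <;> simp [h]

lemma ent_eq_sum {α : Type} [Fintype α] (p : Ω → ℝ) (X : Ω → α) :
    ent p X = -∑ ω, p ω * Real.logb 2 (prob p X (X ω)) := by
  rw [ent, sum_prob_mul p X fun a => Real.logb 2 (prob p X a)]

/-- Entropy only depends on the partition of the sample space induced by the variable. -/
lemma ent_congr {α β : Type} [Fintype α] [Fintype β] (p : Ω → ℝ) {X : Ω → α} {Y : Ω → β}
    (h : ∀ ω ω', X ω = X ω' ↔ Y ω = Y ω') : ent p X = ent p Y := by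
  simp only [ent_eq_sum, prob, h]

/-- Nonnegativity of conditional mutual information. -/
lemma ent_submodular (hp : ∀ ω, 0 ≤ p ω) {α β γ : Type} [Fintype α] [Fintype β] [Fintype γ]
    (X : Ω → α) (Y : Ω → β) (Z : Ω → γ) :
    ent p (fun ω => (X ω, Y ω, Z ω)) + ent p Z
      ≤ ent p (fun ω => (X ω, Z ω)) + ent p (fun ω => (Y ω, Z ω)) := by
  set PXYZ := prob p (fun ω => (X ω, Y ω, Z ω)) with hXYZ
  set PXZ := prob p (fun ω => (X ω, Z ω)) with hXZ
  set PYZ := prob p (fun ω => (Y ω, Z ω)) with hYZ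
  set PZ := prob p Z with hZ
  have hlog : 0 < Real.log 2 := Real.log_pos (by norm_num)
  set r : α × β × γ → ℝ := fun a =>
    PXZ (a.1, a.2.2) * PYZ (a.2.1, a.2.2) / (PXYZ a * PZ a.2.2) with hr
  have hratio : ∑ ω, p ω * r (X ω, Y ω, Z ω) ≤ ∑ ω, p ω := by
    rw [← sum_prob_mul p (fun ω => (X ω, Y ω, Z ω)) r]
    calc ∑ a, PXYZ a * r a
        ≤ ∑ a : α × β × γ, PXZ (a.1, a.2.2) * PYZ (a.2.1, a.2.2) / PZ a.2.2 := by
          refine Finset.sum_le_sum fun a _ => ?_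
          have h0 : 0 ≤ PXYZ a := prob_nonneg hp _ a
          have h1 : 0 ≤ PXZ (a.1, a.2.2) := prob_nonneg hp _ _
          have h2 : 0 ≤ PYZ (a.2.1, a.2.2) := prob_nonneg hp _ _
          have h3 : 0 ≤ PZ a.2.2 := prob_nonneg hp _ _
          rcases h0.eq_or_lt with h | h
          · rw [← h, zero_mul]; positivity
          · refine le_of_eq ?_
            simp only [hr]
            rw [← mul_div_assoc, mul_div_mul_left _ _ h.ne']
      _ = ∑ c, ∑ a, ∑ b, PXZ (a, c) * PYZ (b, c) / PZ c := by
          simp only [Fintype.sum_prod_type]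
          rw [Finset.sum_comm (s := (Finset.univ : Finset γ))]
          exact Finset.sum_congr rfl fun a _ => Finset.sum_comm
      _ = ∑ c, PZ c := by
          refine Finset.sum_congr rfl fun c _ => ?_
          simp only [← Finset.sum_div, ← Finset.mul_sum, ← Finset.sum_mul]
          rw [hXZ, hYZ, sum_prob_pair, sum_prob_pair]
          exact mul_self_div_self _
      _ = ∑ ω, p ω := sum_prob p Z
  have hterm : ∀ ω, (p ω - p ω * r (X ω, Y ω, Z ω)) / Real.log 2 ≤
      p ω * Real.logb 2 (PXYZ (X ω, Y ω, Z ω)) + p ω * Real.logb 2 (PZ (Z ω))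
        - p ω * Real.logb 2 (PXZ (X ω, Z ω)) - p ω * Real.logb 2 (PYZ (Y ω, Z ω)) := by
    intro ω
    rcases (hp ω).eq_or_lt with h | h
    · simp [← h]
    · have h0 : 0 < PXYZ (X ω, Y ω, Z ω) :=
        h.trans_le (le_prob_self hp (fun ω => (X ω, Y ω, Z ω)) ω)
      have h1 : 0 < PXZ (X ω, Z ω) := h.trans_le (le_prob_self hp (fun ω => (X ω, Z ω)) ω)
      have h2 : 0 < PYZ (Y ω, Z ω) := h.trans_le (le_prob_self hp (fun ω => (Y ω, Z ω)) ω)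
      have h3 : 0 < PZ (Z ω) := h.trans_le (le_prob_self hp Z ω)
      have hle := Real.log_le_sub_one_of_pos (x := r (X ω, Y ω, Z ω)) (by simp only [hr]; positivity)
      have hlr : Real.log (r (X ω, Y ω, Z ω)) = Real.log (PXZ (X ω, Z ω))
          + Real.log (PYZ (Y ω, Z ω)) - (Real.log (PXYZ (X ω, Y ω, Z ω)) + Real.log (PZ (Z ω))) := by
        simp only [hr]
        rw [Real.log_div (by positivity) (by positivity), Real.log_mul h1.ne' h2.ne',
          Real.log_mul h0.ne' h3.ne']
      have hmul := mul_le_mul_of_nonneg_left hle h.le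
      rw [hlr] at hmul
      simp only [Real.logb]
      rw [div_le_iff₀ hlog]
      field_simp
      linarith
  have hsum := Finset.sum_le_sum fun ω (_ : ω ∈ Finset.univ) => hterm ω
  rw [← Finset.sum_div] at hsum
  simp only [Finset.sum_sub_distrib, Finset.sum_add_distrib] at hsum
  have hnn : 0 ≤ (∑ ω, p ω - ∑ ω, p ω * r (X ω, Y ω, Z ω)) / Real.log 2 :=
    div_nonneg (sub_nonneg.2 hratio) hlog.le
  simp only [ent_eq_sum]
  linarith

variable {K : ℕ} {α : Fin K → Type} [∀ i, Fintype (α i)]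

/-- Submodularity of `J ↦ H(V_J, W)`. -/
lemma ent_VJ_union_add_inter_le (hp : ∀ ω, 0 ≤ p ω) {δ : Type} [Fintype δ]
    (V : (i : Fin K) → Ω → α i) (W : Ω → δ) (A B : Finset (Fin K)) :
    ent p (fun ω => (VJ V (A ∪ B) ω, W ω)) + ent p (fun ω => (VJ V (A ∩ B) ω, W ω))
      ≤ ent p (fun ω => (VJ V A ω, W ω)) + ent p (fun ω => (VJ V B ω, W ω)) := by
  have h := ent_submodular hp (VJ V A) (VJ V B) (fun ω => (VJ V (A ∩ B) ω, W ω))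
  rwa [ent_congr p (Y := fun ω => (VJ V (A ∪ B) ω, W ω)),
    ent_congr p (X := fun ω => (VJ V A ω, VJ V (A ∩ B) ω, W ω)) (Y := fun ω => (VJ V A ω, W ω)),
    ent_congr p (X := fun ω => (VJ V B ω, VJ V (A ∩ B) ω, W ω)) (Y := fun ω => (VJ V B ω, W ω))]
    at h
  all_goals
    intro ω ω'
    simp only [Prod.mk.injEq, VJ_eq_iff, Finset.mem_union, Finset.mem_inter]
    grind

/-- Under conditional independence, `H(V_𝒦, Q) = H(Q) + ∑ i, (H(V_i, Q) - H(Q))`. -/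
lemma CondIndep.ent_univ (hp : ∀ ω, 0 ≤ p ω) {𝒬 : Type} [Fintype 𝒬] {Q : Ω → 𝒬}
    {V : (i : Fin K) → Ω → α i} (hind : CondIndep p Q V) :
    ent p (fun ω => (VJ V Finset.univ ω, Q ω)) = ent p (fun ω => (VJ V ∅ ω, Q ω))
      + ∑ i, (ent p (fun ω => (VJ V {i} ω, Q ω)) - ent p (fun ω => (VJ V ∅ ω, Q ω))) := by
  rcases Nat.eq_zero_or_pos K with rfl | hK
  · simp [Finset.univ_eq_empty]
    rfl
  have huniv : ent p (fun ω => (VJ V Finset.univ ω, Q ω))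
      = ent p (fun ω => ((fun i => V i ω : (i : Fin K) → α i), Q ω)) :=
    ent_congr p fun ω ω' => by simp [VJ, funext_iff]
  have hempty : ent p (fun ω => (VJ V ∅ ω, Q ω)) = ent p Q :=
    ent_congr p fun ω ω' => by simp [VJ_eq_iff]
  have hsingle : ∀ i, ent p (fun ω => (VJ V {i} ω, Q ω)) = ent p (fun ω => (V i ω, Q ω)) :=
    fun i => ent_congr p fun ω ω' => by simp [VJ_eq_iff]
  have hterm : ∀ ω,
      p ω * Real.logb 2 (prob p (fun ω => ((fun i => V i ω : (i : Fin K) → α i), Q ω))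
          (fun i => V i ω, Q ω)) + ((K : ℝ) - 1) * (p ω * Real.logb 2 (prob p Q (Q ω)))
        = ∑ i, p ω * Real.logb 2 (prob p (fun ω => (V i ω, Q ω)) (V i ω, Q ω)) := by
    intro ω
    rcases (hp ω).eq_or_lt with h | h
    · simp [← h]
    have hV := h.trans_le
      (le_prob_self hp (fun ω => ((fun i => V i ω : (i : Fin K) → α i), Q ω)) ω)
    have hQ := h.trans_le (le_prob_self hp Q ω)
    have hi := fun i => h.trans_le (le_prob_self hp (fun ω => (V i ω, Q ω)) ω)
    have hlog := congrArg (Real.logb 2) (hind (Q ω) fun i => V i ω)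
    rw [Real.logb_mul hV.ne' (pow_pos hQ _).ne', Real.logb_pow,
      Real.logb_prod _ _ fun i _ => (hi i).ne', Nat.cast_sub hK, Nat.cast_one] at hlog
    rw [← Finset.mul_sum, ← hlog]
    ring
  have hsum := Finset.sum_congr rfl fun ω (_ : ω ∈ Finset.univ) => hterm ω
  rw [Finset.sum_add_distrib, ← Finset.mul_sum, Finset.sum_comm] at hsum
  rw [huniv, hempty]
  simp only [hsingle, Finset.sum_sub_distrib, Finset.sum_const, Finset.card_univ, Fintype.card_fin,
    nsmul_eq_mul]
  simp only [ent_eq_sum, Finset.sum_neg_distrib]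
  linarith

end Entropy

/-! ### Submodular set functions -/

section Submodular

variable {ι : Type} [DecidableEq ι] {f : Finset ι → ℝ}

lemma le_add_sum_of_submodular (hf : ∀ A B, f (A ∪ B) + f (A ∩ B) ≤ f A + f B)
    (S : Finset ι) : f S ≤ f ∅ + ∑ i ∈ S, (f {i} - f ∅) := by
  induction S using Finset.induction_on with
  | empty => simp
  | insert a S ha ih =>
    have h := hf {a} S
    rw [Finset.singleton_inter_of_notMem ha, ← Finset.insert_eq] at h
    rw [Finset.sum_insert ha]
    linarith

/-- A submodular function whose value on the whole set is additive over the singletons is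
modular. -/
lemma modular_of_submodular [Fintype ι] (hf : ∀ A B, f (A ∪ B) + f (A ∩ B) ≤ f A + f B)
    (huniv : f Finset.univ = f ∅ + ∑ i, (f {i} - f ∅)) (A B : Finset ι) :
    f (A ∪ B) + f (A ∩ B) = f A + f B := by
  have key : ∀ S, f S = f ∅ + ∑ i ∈ S, (f {i} - f ∅) := by
    intro S
    have h1 := le_add_sum_of_submodular hf S
    have h2 := le_add_sum_of_submodular hf Sᶜ
    have h3 := hf S Sᶜ
    rw [Finset.union_compl, Finset.inter_compl] at h3
    have h4 := Finset.sum_add_sum_compl S fun i => f {i} - f ∅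
    linarith
  rw [key (A ∪ B), key (A ∩ B), key A, key B]
  have h := Finset.sum_union_inter (s₁ := A) (s₂ := B) (f := fun i => f {i} - f ∅)
  linarith

end Submodular

/-! ### The compact form of the element rearrangement -/

section CompactForm

variable {K t : ℕ}

/-- An element belongs to the `i`-th set iff it lies in at least `i` sets of the list. -/
lemma mem_compactForm {T : Fin t → Finset (Fin K)} {i : ℕ} {x : Fin K} :
    x ∈ compactForm T i ↔ i ≤ (Finset.univ.filter fun j => x ∈ T j).card := by
  simp only [compactForm, Finset.mem_sup, Finset.mem_powersetCard, Finset.mem_inf]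
  constructor
  · rintro ⟨S, ⟨-, rfl⟩, hS⟩
    exact Finset.card_le_card fun j hj => by simpa using hS j hj
  · intro h
    obtain ⟨S, hS, hcard⟩ := Finset.exists_subset_card_eq h
    exact ⟨S, ⟨Finset.subset_univ _, hcard⟩, fun j hj => by simpa using hS hj⟩

lemma card_filter_mem_castSucc (T : Fin (t + 1) → Finset (Fin K)) (x : Fin K) :
    (Finset.univ.filter fun j => x ∈ T j).card
      = (Finset.univ.filter fun j : Fin t => x ∈ T j.castSucc).card
        + if x ∈ T (Fin.last t) then 1 else 0 := by
  simp only [Finset.card_filter, Fin.sum_univ_castSucc]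

lemma compactForm_succ (T : Fin (t + 1) → Finset (Fin K)) (i : ℕ) :
    compactForm T (i + 1) = compactForm (fun j : Fin t => T j.castSucc) (i + 1)
      ∪ compactForm (fun j : Fin t => T j.castSucc) i ∩ T (Fin.last t) := by
  ext x
  simp only [Finset.mem_union, Finset.mem_inter, mem_compactForm, card_filter_mem_castSucc]
  split_ifs with h <;> simp only [h] <;> grind

lemma compactForm_last (T : Fin (t + 1) → Finset (Fin K)) :
    compactForm T (t + 1) = compactForm (fun j : Fin t => T j.castSucc) t ∩ T (Fin.last t) := by
  ext x
  have hcard : (Finset.univ.filter fun j : Fin t => x ∈ T j.castSucc).card ≤ t := by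
    simpa using Finset.card_filter_le (Finset.univ : Finset (Fin t)) fun j => x ∈ T j.castSucc
  simp only [Finset.mem_inter, mem_compactForm, card_filter_mem_castSucc]
  split_ifs with h <;> simp only [h] <;> grind

lemma compactForm_zero (T : Fin t → Finset (Fin K)) : compactForm T 0 = Finset.univ := by
  ext x
  simp [mem_compactForm]

lemma compactForm_succ_subset (T : Fin t → Finset (Fin K)) (i : ℕ) :
    compactForm T (i + 1) ⊆ compactForm T i := fun _ hx =>
  mem_compactForm.2 ((Nat.le_succ i).trans (mem_compactForm.1 hx))

/-- Appending one set to the list: the new set is merged into the chain one link at a time. -/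
lemma sum_compactForm_succ_le {f : Finset (Fin K) → ℝ}
    (hf : ∀ A B, f (A ∪ B) + f (A ∩ B) ≤ f A + f B) (T : Fin (t + 1) → Finset (Fin K)) (m : ℕ) :
    ∑ i ∈ Finset.Icc 1 m, f (compactForm T i)
        + f (compactForm (fun j : Fin t => T j.castSucc) m ∩ T (Fin.last t))
      ≤ ∑ i ∈ Finset.Icc 1 m, f (compactForm (fun j : Fin t => T j.castSucc) i)
        + f (T (Fin.last t)) := by
  induction m with
  | zero => simp [compactForm_zero]
  | succ m ih =>
    rw [Finset.sum_Icc_succ_top (by lia), Finset.sum_Icc_succ_top (by lia), compactForm_succ]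
    have h := hf (compactForm (fun j : Fin t => T j.castSucc) (m + 1))
      (compactForm (fun j : Fin t => T j.castSucc) m ∩ T (Fin.last t))
    rw [← Finset.inter_assoc, Finset.inter_eq_left.2 (compactForm_succ_subset _ m)] at h
    linarith

/-- A submodular function does not increase, in total, under element rearrangement. -/
lemma sum_compactForm_le {f : Finset (Fin K) → ℝ}
    (hf : ∀ A B, f (A ∪ B) + f (A ∩ B) ≤ f A + f B) (T : Fin t → Finset (Fin K)) :
    ∑ i ∈ Finset.Icc 1 t, f (compactForm T i) ≤ ∑ i, f (T i) := by
  induction t with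
  | zero => simp
  | succ t ih =>
    rw [Finset.sum_Icc_succ_top (by lia), Fin.sum_univ_castSucc, compactForm_last]
    have h := sum_compactForm_succ_le hf T t
    have h' := ih fun j => T j.castSucc
    linarith

end CompactForm

/-- `I(V_S; Y | V_{Sᶜ}, Q)` in terms of joint entropies. -/
lemma condMI_VJ_compl {Ω 𝒬 𝒴 : Type} [Fintype Ω] [Fintype 𝒬] [Fintype 𝒴] {K : ℕ}
    {α : Fin K → Type} [∀ i, Fintype (α i)] (p : Ω → ℝ) (Q : Ω → 𝒬) (Y : Ω → 𝒴)
    (V : (i : Fin K) → Ω → α i) (S : Finset (Fin K)) :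
    condMI p (VJ V S) Y (fun ω => (VJ V Sᶜ ω, Q ω))
      = ent p (fun ω => (VJ V Finset.univ ω, Q ω)) + ent p (fun ω => (VJ V Sᶜ ω, Y ω, Q ω))
        - ent p (fun ω => (VJ V Finset.univ ω, Y ω, Q ω)) - ent p (fun ω => (VJ V Sᶜ ω, Q ω)) := by
  rw [condMI, ent_congr p (Y := fun ω => (VJ V Finset.univ ω, Q ω)),
    ent_congr p (X := fun ω => (Y ω, VJ V Sᶜ ω, Q ω)) (Y := fun ω => (VJ V Sᶜ ω, Y ω, Q ω)),
    ent_congr p (X := fun ω => (VJ V S ω, Y ω, VJ V Sᶜ ω, Q ω))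
      (Y := fun ω => (VJ V Finset.univ ω, Y ω, Q ω))]
  all_goals
    intro ω ω'
    simp only [Prod.mk.injEq, VJ_eq_iff, Finset.mem_compl, Finset.mem_univ]
    grind

/-- Lemma 5 (first half): for any list `T_1, …, T_t` of subsets of `𝒦` with compact
form `T*_{t,1}, …, T*_{t,t}`, the set function `b⁺(T) = I(V_T; Y | V_{T^c}, Q)`
satisfies `∑ᵢ b⁺(T_i) ≥ ∑ᵢ b⁺(T*_{t,i})`. -/
theorem bplus_sum_ge_compactForm {Ω 𝒬 𝒴 𝒵 : Type} [Fintype Ω] [Fintype 𝒬] [Fintype 𝒴]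
    [Fintype 𝒵] {K : ℕ} {α : Fin K → Type} [∀ i, Fintype (α i)]
    (p : Ω → ℝ) (hp : ∀ ω, 0 ≤ p ω) (hp1 : ∑ ω : Ω, p ω = 1)
    (Q : Ω → 𝒬) (Y : Ω → 𝒴) (Z : Ω → 𝒵) (V : (i : Fin K) → Ω → α i)
    (hind : CondIndep p Q V) (t : ℕ) (T : Fin t → Finset (Fin K)) :
    ∑ i ∈ Finset.Icc 1 t,
        condMI p (VJ V (compactForm T i)) Y (fun ω => (VJ V (compactForm T i)ᶜ ω, Q ω))
      ≤ ∑ i : Fin t, condMI p (VJ V (T i)) Y (fun ω => (VJ V (T i)ᶜ ω, Q ω)) := by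
  refine sum_compactForm_le
    (f := fun S => condMI p (VJ V S) Y (fun ω => (VJ V Sᶜ ω, Q ω))) (fun A B => ?_) T
  have hQ := modular_of_submodular (f := fun S => ent p (fun ω => (VJ V S ω, Q ω)))
    (ent_VJ_union_add_inter_le hp V Q) (hind.ent_univ hp) Aᶜ Bᶜ
  have hYQ := ent_VJ_union_add_inter_le hp V (fun ω => (Y ω, Q ω)) Aᶜ Bᶜ
  rw [← Finset.compl_inter, ← Finset.compl_union] at hYQ
  rw [← Finset.compl_inter, ← Finset.compl_union] at hQ
  simp only [condMI_VJ_compl]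
  linarith
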